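/- Real points of SL_F(2). Let S = {(x,y,z,t) ∈ ℝ⁴ : yz = 0, yt = 0, zt = 0, and x² + y² + z² − t² = 1}. Let C₁ = {(x,y,0,0) ∈ ℝ⁴ : x² + y² = 1}, C₂ = {(x,0,z,0) ∈ ℝ⁴ : x² + z² = 1}, and H = {(x,0,0,t) ∈ ℝ⁴ : x² − t² = 1}. Then S = C₁ ∪ C₂ ∪ H (two circles and a hyperbola), and the pairwise intersections satisfy C₁ ∩ C₂ = C₁ ∩ H = C₂ ∩ H = {(1,0,0,0), (−1,0,0,0)}. -/

import Mathlib

/-- The set of real points of `SL_F(2)`. -/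
def SLF2R : Set (ℝ × ℝ × ℝ × ℝ) :=
  {p | p.2.1 * p.2.2.1 = 0 ∧ p.2.1 * p.2.2.2 = 0 ∧ p.2.2.1 * p.2.2.2 = 0 ∧
    p.1 ^ 2 + p.2.1 ^ 2 + p.2.2.1 ^ 2 - p.2.2.2 ^ 2 = 1}

/-- The circle `C₁ = {(x,y,0,0) : x² + y² = 1}`. -/
def circleC1 : Set (ℝ × ℝ × ℝ × ℝ) :=
  {p | p.2.2.1 = 0 ∧ p.2.2.2 = 0 ∧ p.1 ^ 2 + p.2.1 ^ 2 = 1}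

/-- The circle `C₂ = {(x,0,z,0) : x² + z² = 1}`. -/
def circleC2 : Set (ℝ × ℝ × ℝ × ℝ) :=
  {p | p.2.1 = 0 ∧ p.2.2.2 = 0 ∧ p.1 ^ 2 + p.2.2.1 ^ 2 = 1}

/-- The hyperbola `H = {(x,0,0,t) : x² − t² = 1}`. -/
def hyperbolaH : Set (ℝ × ℝ × ℝ × ℝ) :=
  {p | p.2.1 = 0 ∧ p.2.2.1 = 0 ∧ p.1 ^ 2 - p.2.2.2 ^ 2 = 1}

/-! In a ring without zero divisors, `yz = yt = zt = 0` forces two of `y`, `z`, `t` to vanish, so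
only the sections of the quadric `x² + y² + z² - t² = 1` by the three coordinate planes through the
`x`-axis remain. Any two of these planes meet in that axis, where the equation becomes `x² = 1`. -/

theorem pairwise_mul_eq_zero_iff {M : Type*} [MulZeroClass M] [NoZeroDivisors M] {a b c : M} :
    a * b = 0 ∧ a * c = 0 ∧ b * c = 0 ↔
      (b = 0 ∧ c = 0) ∨ (a = 0 ∧ c = 0) ∨ (a = 0 ∧ b = 0) := by
  simp only [mul_eq_zero]
  tauto

theorem ofPred_snd_eq_zero_and_fst_sq_eq_one (R M : Type*) [Ring R] [NoZeroDivisors R] [Zero M] :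
    {p : R × M | p.2 = 0 ∧ p.1 ^ 2 = 1} = {(1, 0), (-1, 0)} := by
  ext ⟨x, v⟩
  simp only [Set.mem_ofPred_eq, Set.mem_insert_iff, Set.mem_singleton_iff, Prod.mk.injEq,
    sq_eq_one_iff]
  tauto

section Circles

variable (R : Type*) [Semiring R]

/-- The circle `x² + y² = 1` in the plane `z = t = 0`; over `ℝ` it is `C₁`. -/
def xyCircle : Set (R × R × R × R) :=
  {p | p.2.2.1 = 0 ∧ p.2.2.2 = 0 ∧ p.1 ^ 2 + p.2.1 ^ 2 = 1}

/-- The circle `x² + z² = 1` in the plane `y = t = 0`; over `ℝ` it is `C₂`. -/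
def xzCircle : Set (R × R × R × R) :=
  {p | p.2.1 = 0 ∧ p.2.2.2 = 0 ∧ p.1 ^ 2 + p.2.2.1 ^ 2 = 1}

theorem xyCircle_inter_xzCircle : xyCircle R ∩ xzCircle R = {p | p.2 = 0 ∧ p.1 ^ 2 = 1} := by
  ext ⟨x, y, z, t⟩
  simp only [xyCircle, xzCircle, Set.mem_inter_iff, Set.mem_ofPred_eq, Prod.mk_eq_zero]
  constructor
  · rintro ⟨⟨rfl, rfl, h⟩, rfl, -, -⟩
    simpa using h
  · rintro ⟨⟨rfl, rfl, rfl⟩, h⟩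
    simpa using h

end Circles

section Hyperbola

variable (R : Type*) [Ring R]

/-- The hyperbola `x² - t² = 1` in the plane `y = z = 0`; over `ℝ` it is `H`. -/
def xtHyperbola : Set (R × R × R × R) :=
  {p | p.2.1 = 0 ∧ p.2.2.1 = 0 ∧ p.1 ^ 2 - p.2.2.2 ^ 2 = 1}

theorem xyCircle_inter_xtHyperbola :
    xyCircle R ∩ xtHyperbola R = {p | p.2 = 0 ∧ p.1 ^ 2 = 1} := by
  ext ⟨x, y, z, t⟩
  simp only [xyCircle, xtHyperbola, Set.mem_inter_iff, Set.mem_ofPred_eq, Prod.mk_eq_zero]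
  constructor
  · rintro ⟨⟨rfl, rfl, h⟩, rfl, -, -⟩
    simpa using h
  · rintro ⟨⟨rfl, rfl, rfl⟩, h⟩
    simpa using h

theorem xzCircle_inter_xtHyperbola :
    xzCircle R ∩ xtHyperbola R = {p | p.2 = 0 ∧ p.1 ^ 2 = 1} := by
  ext ⟨x, y, z, t⟩
  simp only [xzCircle, xtHyperbola, Set.mem_inter_iff, Set.mem_ofPred_eq, Prod.mk_eq_zero]
  constructor
  · rintro ⟨⟨rfl, rfl, h⟩, -, rfl, -⟩
    simpa using h
  · rintro ⟨⟨rfl, rfl, rfl⟩, h⟩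
    simpa using h

end Hyperbola

/-- The points of `SL_F(2)` with coordinates in `R`, given by the equations that define `SLF2R` over
`ℝ`. When `R` is a commutative domain with `2 ≠ 0`, they correspond to the homomorphisms from
`SL_F(2)` to `R`, since there `yz = -zy` means `yz = 0`. -/
def slfTwoPoints (R : Type*) [Ring R] : Set (R × R × R × R) :=
  {p | p.2.1 * p.2.2.1 = 0 ∧ p.2.1 * p.2.2.2 = 0 ∧ p.2.2.1 * p.2.2.2 = 0 ∧
    p.1 ^ 2 + p.2.1 ^ 2 + p.2.2.1 ^ 2 - p.2.2.2 ^ 2 = 1}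

theorem slfTwoPoints_eq_union (R : Type*) [Ring R] [NoZeroDivisors R] :
    slfTwoPoints R = xyCircle R ∪ xzCircle R ∪ xtHyperbola R := by
  ext ⟨x, y, z, t⟩
  simp only [slfTwoPoints, xyCircle, xzCircle, xtHyperbola, Set.mem_union, Set.mem_ofPred_eq]
  constructor
  · rintro ⟨hyz, hyt, hzt, quadric⟩
    rcases pairwise_mul_eq_zero_iff.mp ⟨hyz, hyt, hzt⟩ with ⟨rfl, rfl⟩ | ⟨rfl, rfl⟩ | ⟨rfl, rfl⟩
    · exact .inl (.inl ⟨rfl, rfl, by simpa using quadric⟩)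
    · exact .inl (.inr ⟨rfl, rfl, by simpa using quadric⟩)
    · exact .inr ⟨rfl, rfl, by simpa using quadric⟩
  · rintro ((⟨rfl, rfl, conic⟩ | ⟨rfl, rfl, conic⟩) | ⟨rfl, rfl, conic⟩) <;> simpa using conic

theorem SLF2R_eq_union_and_inter_general (R : Type*) [Ring R] [NoZeroDivisors R] :
    slfTwoPoints R = xyCircle R ∪ xzCircle R ∪ xtHyperbola R ∧
    xyCircle R ∩ xzCircle R = {(1, 0, 0, 0), (-1, 0, 0, 0)} ∧
    xyCircle R ∩ xtHyperbola R = {(1, 0, 0, 0), (-1, 0, 0, 0)} ∧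
    xzCircle R ∩ xtHyperbola R = {(1, 0, 0, 0), (-1, 0, 0, 0)} := by
  have axis_points := ofPred_snd_eq_zero_and_fst_sq_eq_one R (R × R × R)
  exact ⟨slfTwoPoints_eq_union R,
    (xyCircle_inter_xzCircle R).trans axis_points,
    (xyCircle_inter_xtHyperbola R).trans axis_points,
    (xzCircle_inter_xtHyperbola R).trans axis_points⟩

/-- The real points of `SL_F(2)` consist of two circles and a hyperbola, all
intersecting in the two points `(±1, 0, 0, 0)`. -/
theorem SLF2R_eq_union_and_inter :
    SLF2R = circleC1 ∪ circleC2 ∪ hyperbolaH ∧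
    circleC1 ∩ circleC2 = {((1 : ℝ), (0 : ℝ), (0 : ℝ), (0 : ℝ)), ((-1 : ℝ), (0 : ℝ), (0 : ℝ), (0 : ℝ))} ∧
    circleC1 ∩ hyperbolaH = {((1 : ℝ), (0 : ℝ), (0 : ℝ), (0 : ℝ)), ((-1 : ℝ), (0 : ℝ), (0 : ℝ), (0 : ℝ))} ∧
    circleC2 ∩ hyperbolaH = {((1 : ℝ), (0 : ℝ), (0 : ℝ), (0 : ℝ)), ((-1 : ℝ), (0 : ℝ), (0 : ℝ), (0 : ℝ))} :=
  SLF2R_eq_union_and_inter_general ℝ
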